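/- Let (T,f) be a Hubbard tree, let z₁ be a characteristic periodic point of exact period m, and let G be a global arm at z₁. Then either f^k(G) does not contain c₀ for all 0 ≤ k < m (and in particular the first return map f^m maps G homeomorphically onto its image), or the first return map f^m sends the local arm contained in G to the local arm at z₁ pointing toward the critical point c₀ or to the local arm at z₁ pointing toward the critical value c₁. -/

import Mathlib

/- Common definitions for formalizing "Admissibility of kneading sequences and
structure of Hubbard trees for quadratic polynomials" by Bruin–Schleicher. -/

namespace HubbardTrees

/-- The symbols `0`, `1`, `*` used for itineraries and kneading sequences. -/
inductive Sym : Type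
  | zero : Sym
  | one : Sym
  | star : Sym
deriving DecidableEq

/-- `A` is an arc in `X` joining `x` and `y` (a point if `x = y`, otherwise a
homeomorphic image of `[0,1]` with endpoints `x` and `y`). -/
def IsArcBetween {X : Type*} [TopologicalSpace X] (A : Set X) (x y : X) : Prop :=
  (x = y ∧ A = {x}) ∨
  (x ≠ y ∧ ∃ γ : Path x y, Topology.IsEmbedding ⇑γ ∧ Set.range ⇑γ = A)

/-- The global arms at `x`: the connected components of `X \ {x}`. -/
def arms {X : Type*} [TopologicalSpace X] (x : X) : Set (Set X) :=
  {C | ∃ y, y ≠ x ∧ C = connectedComponentIn {x}ᶜ y}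

/-- The global arm at `x` containing `y` (for `y ≠ x`): the component of `X \ {x}`
containing `y`.  Local arms at `x` being germs of global arms, we represent the local
arm at `x` pointing towards `y` by this set. -/
def armTo {X : Type*} [TopologicalSpace X] (x y : X) : Set X :=
  connectedComponentIn {x}ᶜ y

/-- `x` is an endpoint: it has exactly one arm. -/
def IsEndpoint {X : Type*} [TopologicalSpace X] (x : X) : Prop :=
  (arms x).ncard = 1

/-- `x` is a branch point: it has at least three arms. -/
def IsBranchPt {X : Type*} [TopologicalSpace X] (x : X) : Prop :=
  3 ≤ (arms x).ncard

/-- `f` maps the set `A` homeomorphically onto its image. -/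
def MapsHomeoOn {X : Type*} [TopologicalSpace X] (f : X → X) (A : Set X) : Prop :=
  Topology.IsEmbedding (A.restrict f)

/-- `f` is a local homeomorphism onto its image at `x`. -/
def IsLocalHomeoAt {X : Type*} [TopologicalSpace X] (f : X → X) (x : X) : Prop :=
  ∃ U : Set X, IsOpen U ∧ x ∈ U ∧ Topology.IsEmbedding (U.restrict f)

/-- `g` sends the local arm at `x` represented by the global arm `C` to the local
arm at `g x` represented by `C'` (germ condition: some initial piece of `C` at `x`
is mapped into `C'`). -/
def MapsLocalArm {X : Type*} [TopologicalSpace X] (g : X → X) (x : X) (C C' : Set X) : Prop :=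
  C ∈ arms x ∧ C' ∈ arms (g x) ∧ ∃ U ∈ nhds x, g '' (C ∩ U) ⊆ C'

/-- `z` is periodic under `f` with exact period `n`. -/
def ExactPeriod {Y : Type*} (f : Y → Y) (z : Y) (n : ℕ) : Prop :=
  1 ≤ n ∧ f^[n] z = z ∧ ∀ k, 1 ≤ k → k < n → f^[k] z ≠ z

/-- The first return map `f^[n]` of the fixed point `z` of `f^[n]` permutes all the
local arms at `z` transitively in a single cycle. -/
def ArmsTransitive {X : Type*} [TopologicalSpace X] (f : X → X) (n : ℕ) (z : X) : Prop :=
  ∀ C ∈ arms z, ∀ C' ∈ arms z, ∃ j : ℕ, MapsLocalArm (f^[n * j]) z C C'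

/-- An (abstract) Hubbard tree: a finite topological tree `X` together with a
continuous surjection `f` and a critical point `c0`, subject to the axioms of
Bruin–Schleicher. -/
structure HubbardTree (X : Type*) [TopologicalSpace X] : Type _ where
  /-- the dynamics -/
  f : X → X
  /-- the critical point -/
  c0 : X
  compact : CompactSpace X
  t2 : T2Space X
  conn : ConnectedSpace X
  /-- the unique arc `[x,y]` joining two points -/
  arc : X → X → Set X
  arc_isArc : ∀ x y : X, IsArcBetween (arc x y) x y
  arc_unique : ∀ (x y : X) (A : Set X), IsArcBetween A x y → A = arc x y
  -- finiteness of the tree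
  arms_finite : ∀ x : X, (arms x).Finite
  branch_finite : Set.Finite {x : X | IsBranchPt x}
  endpoint_finite : Set.Finite {x : X | IsEndpoint x}
  cont : Continuous f
  surj : Function.Surjective f
  /-- every point has at most two inverse images -/
  two_preimages : ∀ y : X, ∃ a b : X, f ⁻¹' {y} ⊆ {a, b}
  /-- local homeomorphism onto its image away from the critical point -/
  local_homeo : ∀ x : X, x ≠ c0 → IsLocalHomeoAt f x
  /-- all endpoints lie on the critical orbit -/
  endpoints_on_orbit : ∀ x : X, IsEndpoint x → ∃ k : ℕ, f^[k] c0 = x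
  /-- the critical point is periodic or preperiodic -/
  crit_preperiodic : ∃ k n : ℕ, 1 ≤ n ∧ f^[k + n] c0 = f^[k] c0
  /-- the critical point is not fixed -/
  crit_not_fixed : f c0 ≠ c0
  /-- expansivity -/
  expansive : ∀ x y : X, x ≠ y →
    (IsBranchPt x ∨ ∃ k : ℕ, f^[k] c0 = x) →
    (IsBranchPt y ∨ ∃ k : ℕ, f^[k] c0 = y) →
    ∃ n : ℕ, c0 ∈ f^[n] '' (arc x y)

namespace HubbardTree

variable {X : Type*} [TopologicalSpace X] (H : HubbardTree X)

/-- The critical value `c₁ = f(c₀)`. -/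
def c1 : X := H.f H.c0

/-- The component `T₁` of `T \ {c₀}` containing the critical value. -/
def T1 : Set X := connectedComponentIn {H.c0}ᶜ H.c1

open Classical in
/-- The symbol (`0`, `1` or `*`) attached to a point of the tree. -/
noncomputable def symOf (x : X) : Sym :=
  if x = H.c0 then Sym.star else if x ∈ H.T1 then Sym.one else Sym.zero

/-- The itinerary of `x`: a sequence of symbols, 1-indexed (the value at index `0`
is irrelevant); entry `k ≥ 1` is the symbol of `f^[k-1] x`. -/
noncomputable def itin (x : X) : ℕ → Sym :=
  fun k => H.symOf (H.f^[k - 1] x)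

/-- The kneading sequence: the itinerary of the critical value (1-indexed). -/
noncomputable def kneading : ℕ → Sym := H.itin H.c1

/-- `z` is the characteristic point of its periodic orbit: `c₁` lies in one
component of `X \ {z}` while `c₀` and all other points of the orbit lie in a
different component. -/
def IsCharacteristic (z : X) : Prop :=
  ∃ Cv Cz : Set X, Cv ∈ arms z ∧ Cz ∈ arms z ∧ Cv ≠ Cz ∧
    H.c1 ∈ Cv ∧ H.c0 ∈ Cz ∧ ∀ k : ℕ, H.f^[k] z ≠ z → H.f^[k] z ∈ Cz

/-- The first return map fixes the local arm at `z` pointing to the critical point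
and permutes all other local arms transitively in a single cycle. -/
def OtherArmsTransitive (n : ℕ) (z : X) : Prop :=
  ∀ C ∈ arms z, C ≠ armTo z H.c0 → ∀ C' ∈ arms z, C' ≠ armTo z H.c0 →
    ∃ j : ℕ, MapsLocalArm (H.f^[n * j]) z C C'

/-- `z` is the characteristic point of an evil periodic orbit of branch points of
exact period `n`. -/
def IsEvilOrbit (z : X) (n : ℕ) : Prop :=
  ExactPeriod H.f z n ∧ (∀ k : ℕ, IsBranchPt (H.f^[k] z)) ∧
    H.IsCharacteristic z ∧ ¬ ArmsTransitive H.f n z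

/-- `x` is precritical with `Step(x) = k`: `k ≥ 1` is minimal with `f^[k] x = c₁`. -/
def Step (x : X) (k : ℕ) : Prop :=
  1 ≤ k ∧ H.f^[k] x = H.c1 ∧ ∀ j, 1 ≤ j → j < k → H.f^[j] x ≠ H.c1

/-- `x` is the closest precritical point `ζ_k`. -/
def IsClosestPrecritical (x : X) (k : ℕ) : Prop :=
  H.Step x k ∧ ∀ j, 1 ≤ j → j < k → H.c1 ∉ H.f^[j] '' (H.arc H.c1 x)

/-- `x` is the earliest precritical point on the set `A`, with `Step(x) = k`:
it is a precritical point on `A` of minimal Step. -/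
def IsEarliestPrecriticalOn (A : Set X) (x : X) (k : ℕ) : Prop :=
  x ∈ A ∧ H.Step x k ∧ ∀ y ∈ A, ∀ j : ℕ, H.Step y j → k ≤ j

/-- Marked points: branch points and points of the critical orbit. -/
def MarkedPt (x : X) : Prop :=
  IsBranchPt x ∨ ∃ k : ℕ, H.f^[k] H.c0 = x

/-- Two marked points are joined by an edge if the arc between them contains no
further marked point. -/
def IsEdge (x y : X) : Prop :=
  H.MarkedPt x ∧ H.MarkedPt y ∧ x ≠ y ∧
    ∀ w ∈ H.arc x y, H.MarkedPt w → w = x ∨ w = y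

/-- Equivalence of Hubbard trees: a bijection between the marked points which
conjugates the dynamics and preserves edges. -/
def Equivalent {Y : Type*} [TopologicalSpace Y] (H' : HubbardTree Y) : Prop :=
  ∃ φ : X → Y,
    (∀ x : X, H.MarkedPt x → H'.MarkedPt (φ x)) ∧
    (∀ x x' : X, H.MarkedPt x → H.MarkedPt x' → φ x = φ x' → x = x') ∧
    (∀ y : Y, H'.MarkedPt y → ∃ x : X, H.MarkedPt x ∧ φ x = y) ∧
    φ H.c0 = H'.c0 ∧
    (∀ x : X, H.MarkedPt x → φ (H.f x) = H'.f (φ x)) ∧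
    (∀ x x' : X, H.MarkedPt x → H.MarkedPt x' →
      (H.IsEdge x x' ↔ H'.IsEdge (φ x) (φ x')))

end HubbardTree

/-! ### Combinatorics of kneading sequences -/

/-- The function `ρ_ν(n) = inf { k > n : ν_k ≠ ν_{k-n} } ∈ ℕ ∪ {∞}` (sequences are
1-indexed). -/
noncomputable def rho (ν : ℕ → Sym) (n : ℕ) : ℕ∞ :=
  sInf {e : ℕ∞ | ∃ j : ℕ, e = (j : ℕ∞) ∧ n < j ∧ ν j ≠ ν (j - n)}

/-- `RhoOrbit ν k m` means that `m` belongs to the `ρ`-orbit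
`k → ρ(k) → ρ(ρ(k)) → ⋯` of `k` (stopped before reaching `∞`). -/
inductive RhoOrbit (ν : ℕ → Sym) : ℕ → ℕ → Prop
  | refl (k : ℕ) : RhoOrbit ν k k
  | step {k m j : ℕ} : RhoOrbit ν k m → rho ν m = (j : ℕ∞) → RhoOrbit ν k j

/-- `m` occurs in the internal address `1 → ρ(1) → ρ(ρ(1)) → ⋯` of `ν`. -/
def InternalAddress (ν : ℕ → Sym) (m : ℕ) : Prop := RhoOrbit ν 1 m

/-- `ν` is a `*`-periodic kneading sequence of (exact) period `n`:
`ν = overline(1 ν₂ … ν_{n-1} *)`. -/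
def StarPeriodic (ν : ℕ → Sym) (n : ℕ) : Prop :=
  2 ≤ n ∧ ν 1 = Sym.one ∧ ν n = Sym.star ∧
    (∀ k, 1 ≤ k → ν (k + n) = ν k) ∧
    (∀ k, 1 ≤ k → k < n → ν k ≠ Sym.star)

/-- `ν` fails the admissibility condition for period `m`. -/
def FailsAdmissibility (ν : ℕ → Sym) (m : ℕ) : Prop :=
  1 ≤ m ∧
  ¬ InternalAddress ν m ∧
  (∀ k : ℕ, k ∣ m → 1 ≤ k → k < m → rho ν k ≤ (m : ℕ∞)) ∧
  ∃ R r : ℕ, rho ν m = (R : ℕ∞) ∧ 1 ≤ r ∧ r ≤ m ∧ r ≡ R [MOD m] ∧ RhoOrbit ν r m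

open Classical in
/-- The number `q(m)` of arms predicted by the kneading sequence, where
`ρ(m) = R < ∞` and `r ∈ {1,…,m}` is congruent to `R` modulo `m`. -/
noncomputable def qArms (ν : ℕ → Sym) (m R r : ℕ) : ℕ :=
  if RhoOrbit ν r m then (R - r) / m + 1 else (R - r) / m + 2


/-! ### Embeddings into the plane and cyclic order of arms -/

/-- Three points in the plane are in (strictly) counterclockwise position. -/
def Ccw (p q r : ℝ × ℝ) : Prop :=
  0 < (q.1 - p.1) * (r.2 - p.2) - (q.2 - p.2) * (r.1 - p.1)

namespace HubbardTree

variable {X : Type*} [TopologicalSpace X] (H : HubbardTree X)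

/-- Under an embedding `φ` of the tree into the plane, `p` is a first exit point of
the arm `C` at `x` through the circle of radius `ε` around `φ x`: `p = φ y` for a
point `y ∈ C` at distance exactly `ε`, such that the arc from `x` to `y` stays
within distance `< ε` before reaching `y`. -/
def ExitPt (φ : X → ℝ × ℝ) (x : X) (C : Set X) (ε : ℝ) (p : ℝ × ℝ) : Prop :=
  ∃ y ∈ C, φ y = p ∧ dist (φ x) p = ε ∧
    ∀ z ∈ H.arc x y, z ≠ y → dist (φ x) (φ z) < ε

/-- The local arms at `x` represented by the arms `C, C', C''` are in
counterclockwise cyclic order under the embedding `φ`. -/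
def ArmsCcw (φ : X → ℝ × ℝ) (x : X) (C C' C'' : Set X) : Prop :=
  ∃ ε₀ : ℝ, 0 < ε₀ ∧ ∀ ε : ℝ, 0 < ε → ε < ε₀ →
    ∀ p p' p'' : ℝ × ℝ, H.ExitPt φ x C ε p → H.ExitPt φ x C' ε p' →
      H.ExitPt φ x C'' ε p'' → Ccw p p' p''

/-- `f` respects the cyclic order (induced by the embedding `φ`) of the local arms
at all branch points. -/
def RespectsCyclicOrder (φ : X → ℝ × ℝ) : Prop :=
  ∀ x : X, IsBranchPt x →
    ∀ C C' C'' : Set X, C ∈ arms x → C' ∈ arms x → C'' ∈ arms x →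
      C ≠ C' → C' ≠ C'' → C ≠ C'' → H.ArmsCcw φ x C C' C'' →
      ∀ D D' D'' : Set X, MapsLocalArm H.f x C D → MapsLocalArm H.f x C' D' →
        MapsLocalArm H.f x C'' D'' → H.ArmsCcw φ (H.f x) D D' D''

/-- The Hubbard tree can be topologically embedded into the plane `ℝ²` so that `f`
respects the cyclic order of the local arms at all branch points. -/
def PlanarEmbeddable : Prop :=
  ∃ φ : X → ℝ × ℝ, Topology.IsEmbedding φ ∧ H.RespectsCyclicOrder φ

end HubbardTree


section Helpers

open Set Topology

section Basic

variable {X : Type*} [TopologicalSpace X]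

theorem mem_armTo_self {p x : X} (h : x ≠ p) : x ∈ armTo p x :=
  mem_connectedComponentIn h

theorem armTo_eq {p x y : X} (h : y ∈ armTo p x) : armTo p x = armTo p y :=
  connectedComponentIn_eq h

theorem armTo_comm {p x y : X} (h : y ∈ armTo p x) : x ∈ armTo p y := by
  have hx : x ≠ p := by
    rintro rfl
    have : armTo x x = ∅ := connectedComponentIn_eq_empty (by simp)
    rw [this] at h
    exact h
  rw [← armTo_eq h]
  exact mem_armTo_self hx

theorem subset_armTo {p x : X} {S : Set X} (hS : IsPreconnected S) (hp : p ∉ S) (hx : x ∈ S) :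
    S ⊆ armTo p x :=
  hS.subset_connectedComponentIn hx (fun y hy h => hp (by rw [mem_singleton_iff] at h; exact h ▸ hy))

theorem notMem_armTo {p x : X} : p ∉ armTo p x := fun h =>
  connectedComponentIn_subset _ _ h rfl

theorem ne_of_mem_armTo {p x y : X} (h : y ∈ armTo p x) : y ≠ p := by
  rintro rfl
  exact notMem_armTo h

theorem isPreconnected_armTo {p x : X} : IsPreconnected (armTo p x) :=
  isPreconnected_connectedComponentIn

theorem closure_armTo {p x : X} : closure (armTo p x) ⊆ insert p (armTo p x) := by
  intro y hy
  by_cases hyp : y = p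
  · exact Or.inl hyp
  right
  by_cases hx : x = p
  · subst hx
    have : armTo x x = ∅ := connectedComponentIn_eq_empty (by simp)
    rw [this] at hy
    simp at hy
  have : closure (armTo p x) ∩ {p}ᶜ ⊆ armTo p x := by
    apply subset_armTo
    · apply isPreconnected_armTo.subset_closure (t := closure (armTo p x) ∩ {p}ᶜ)
      · exact subset_inter subset_closure (connectedComponentIn_subset _ _)
      · exact inter_subset_left
    · simp
    · exact ⟨subset_closure (mem_armTo_self hx), hx⟩
  exact this ⟨hy, hyp⟩

theorem armTo_mem_arms {p x : X} (h : x ≠ p) : armTo p x ∈ arms p := ⟨x, h, rfl⟩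

variable [T2Space X]

theorem isOpen_armTo (hfin : ∀ x : X, (arms x).Finite) (p x : X) : IsOpen (armTo p x) := by
  have : armTo p x = {p}ᶜ ∩ (⋃ C ∈ (arms p \ {armTo p x}), closure C)ᶜ := by
    apply Subset.antisymm
    · intro y hy
      refine ⟨ne_of_mem_armTo hy, ?_⟩
      simp only [mem_compl_iff, mem_iUnion, not_exists]
      rintro C ⟨⟨w, hw, rfl⟩, hC⟩ hyC
      rcases closure_armTo hyC with h | h
      · exact ne_of_mem_armTo hy h
      · exact hC ((armTo_eq h).trans (armTo_eq hy).symm)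
    · rintro y ⟨hy, hy'⟩
      by_contra hcon
      apply hy'
      simp only [mem_iUnion]
      refine ⟨armTo p y, ⟨armTo_mem_arms hy, ?_⟩, subset_closure (mem_armTo_self hy)⟩
      intro h
      rw [mem_singleton_iff] at h
      exact hcon (h ▸ mem_armTo_self hy)
  rw [this]
  refine isOpen_compl_singleton.inter (IsClosed.isOpen_compl (self := ?_))
  exact ((hfin p).subset sdiff_subset).isClosed_biUnion (fun _ _ => isClosed_closure)

variable [ConnectedSpace X]

theorem isPreconnected_insert_armTo (hfin : ∀ x : X, (arms x).Finite) (p x : X) :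
    IsPreconnected (insert p (armTo p x)) := by
  by_cases hx : x = p
  · subst hx
    have : armTo x x = ∅ := connectedComponentIn_eq_empty (by simp)
    rw [this]
    simpa using isPreconnected_singleton
  refine isPreconnected_armTo.subset_closure (subset_insert _ _) ?_
  apply insert_subset _ subset_closure
  by_contra hcon
  have hcl : IsClosed (armTo p x) := by
    apply isClosed_of_closure_subset
    intro y hy
    rcases closure_armTo hy with h | h
    · exact absurd (h ▸ hy) hcon
    · exact h
  have := IsClopen.eq_univ ⟨hcl, isOpen_armTo hfin p x⟩ ⟨x, mem_armTo_self hx⟩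
  exact notMem_armTo (this ▸ mem_univ p)

theorem isPreconnected_compl_armTo (hfin : ∀ x : X, (arms x).Finite) (p x : X) :
    IsPreconnected (armTo p x)ᶜ := by
  apply isPreconnected_of_forall p
  intro y hy
  refine ⟨insert p (armTo p y), ?_, mem_insert _ _, ?_, isPreconnected_insert_armTo hfin p y⟩
  · apply insert_subset notMem_armTo
    intro w hw hw'
    apply hy
    rw [armTo_eq hw', ← armTo_eq hw]
    apply mem_armTo_self
    rintro rfl
    have : armTo y y = ∅ := connectedComponentIn_eq_empty (by simp)
    rw [this] at hw
    exact hw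
  · by_cases h : y = p
    · exact Or.inl h
    · exact Or.inr (mem_armTo_self h)

variable [CompactSpace X]

/-- `E(s) ⊆ E(t)`. -/
theorem compl_armTo_subset (hfin : ∀ x : X, (arms x).Finite) {p t s : X} (ht : t ≠ p)
    (hs : s ∉ armTo t p) (hst : s ≠ t) : insert t (armTo t p) ⊆ armTo s p := by
  apply subset_armTo (isPreconnected_insert_armTo hfin t p)
  · simp [hst, hs]
  · exact Or.inr (mem_armTo_self ht.symm)

theorem exists_endpoint (hfin : ∀ x : X, (arms x).Finite) {p t : X} (ht : t ≠ p) :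
    ∃ e, e ∉ armTo t p ∧ IsEndpoint e := by
  let S : Set (Set X) := {E | ∃ s, s ∉ armTo t p ∧ E = (armTo s p)ᶜ}
  have hpt : p ∈ armTo t p := mem_armTo_self ht.symm
  have hsub : ∀ s u, s ≠ p → u ∉ armTo s p → (armTo u p)ᶜ ⊆ (armTo s p)ᶜ := by
    intro s u hs hu
    by_cases h : u = s
    · subst h; exact Subset.rfl
    · exact compl_subset_compl.2 ((subset_insert _ _).trans (compl_armTo_subset hfin hs hu h))
  have hnp : ∀ s, s ∉ armTo t p → s ≠ p := by
    rintro s hs rfl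
    exact hs hpt
  obtain ⟨E, hE⟩ : ∃ E, Minimal (· ∈ S) E := by
    apply zorn_superset
    intro c hcS hc
    rcases c.eq_empty_or_nonempty with rfl | hne
    · exact ⟨_, ⟨t, notMem_armTo, rfl⟩, by simp⟩
    · have : Nonempty c := hne.to_subtype
      obtain ⟨s, hs⟩ : (⋂₀ c).Nonempty := by
        apply IsCompact.nonempty_sInter_of_directed_nonempty_isCompact_isClosed
        · intro U hU V hV
          rcases hc.total hU hV with h | h
          · exact ⟨U, hU, Subset.rfl, h⟩
          · exact ⟨V, hV, h, Subset.rfl⟩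
        · intro U hU
          obtain ⟨s, hs, rfl⟩ := hcS hU
          exact ⟨s, notMem_armTo⟩
        · intro U hU
          obtain ⟨s, hs, rfl⟩ := hcS hU
          exact (isOpen_armTo hfin _ _).isClosed_compl.isCompact
        · intro U hU
          obtain ⟨s, hs, rfl⟩ := hcS hU
          exact (isOpen_armTo hfin _ _).isClosed_compl
      refine ⟨(armTo s p)ᶜ, ⟨s, ?_, rfl⟩, ?_⟩
      · obtain ⟨U, hU⟩ := hne
        obtain ⟨u, hu, rfl⟩ := hcS hU
        exact hsub t u ht hu (hs _ hU)
      · intro U hU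
        obtain ⟨u, hu, rfl⟩ := hcS hU
        exact hsub u s (hnp u hu) (hs _ hU)
  obtain ⟨s, hs, rfl⟩ := hE.prop
  refine ⟨s, hs, ?_⟩
  have hsp := hnp s hs
  rw [IsEndpoint, ncard_eq_one]
  refine ⟨armTo s p, Subset.antisymm ?_ (singleton_subset_iff.2 (armTo_mem_arms hsp.symm))⟩
  rintro C ⟨y, hy, rfl⟩
  by_contra hne
  have hy' : y ∉ armTo s p := fun h => hne (armTo_eq h).symm
  have h1 := compl_armTo_subset hfin hsp hy' hy
  have h2 := hE.le_of_le (y := (armTo y p)ᶜ) ⟨y, hsub t s ht hs hy', rfl⟩ (hsub s y hsp hy')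
  exact h2 (notMem_armTo : s ∉ armTo s p) (h1 (mem_insert _ _))

end Basic

structure InjPath {X : Type*} [TopologicalSpace X] (γ : ℝ → X) (a b : ℝ) : Prop where
  lt : a < b
  cont : ContinuousOn γ (Icc a b)
  inj : InjOn γ (Icc a b)

structure Dend (X : Type*) [TopologicalSpace X] : Prop where
  fin : ∀ x : X, (arms x).Finite
  br : Set.Finite {x : X | IsBranchPt x}
  en : Set.Finite {x : X | IsEndpoint x}
  path : ∀ x y : X, x ≠ y → ∃ (γ : ℝ → X) (a b : ℝ), InjPath γ a b ∧ γ a = x ∧ γ b = y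

section Paths

variable {X : Type*} [TopologicalSpace X] {γ : ℝ → X} {a b : ℝ}

theorem InjPath.sub (h : InjPath γ a b) {c d : ℝ} (hcd : c < d) (hc : a ≤ c) (hd : d ≤ b) :
    InjPath γ c d :=
  ⟨hcd, h.cont.mono (Icc_subset_Icc hc hd), h.inj.mono (Icc_subset_Icc hc hd)⟩

theorem InjPath.rev (h : InjPath γ a b) : InjPath (fun t => γ (-t)) (-b) (-a) := by
  refine ⟨by linarith [h.lt], ?_, ?_⟩
  · apply h.cont.comp continuous_neg.continuousOn
    intro t ht
    exact ⟨by linarith [ht.2], by linarith [ht.1]⟩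
  · intro s hs t ht hst
    have := h.inj (x₁ := -s) (x₂ := -t) ⟨by linarith [hs.2], by linarith [hs.1]⟩
      ⟨by linarith [ht.2], by linarith [ht.1]⟩ hst
    linarith

theorem InjPath.ne (h : InjPath γ a b) {u v : ℝ} (hu : u ∈ Icc a b) (hv : v ∈ Icc a b)
    (huv : u ≠ v) : γ u ≠ γ v := fun e => huv (h.inj hu hv e)

/-- piece of a continuous path avoiding `p`. -/
theorem piece_armTo (h : ContinuousOn γ (Icc a b)) {c d : ℝ} (hc : a ≤ c) (hd : d ≤ b) {p : X}
    (hp : ∀ t ∈ Icc c d, γ t ≠ p) {s t : ℝ} (hs : s ∈ Icc c d) (ht : t ∈ Icc c d) :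
    γ s ∈ armTo p (γ t) := by
  have : IsPreconnected (γ '' Icc c d) :=
    isPreconnected_Icc.image _ (h.mono (Icc_subset_Icc hc hd))
  refine subset_armTo this ?_ (mem_image_of_mem _ ht) (mem_image_of_mem _ hs)
  rintro ⟨t, ht, e⟩
  exact hp t ht e

theorem InjPath.left (h : InjPath γ a b) {u v : ℝ} (hu : u ∈ Icc a b) (hv : a ≤ v) (hvu : v < u) :
    γ v ∈ armTo (γ u) (γ a) := by
  refine piece_armTo h.cont (c := a) (d := v) le_rfl (by linarith [hu.2]) ?_ ⟨hv, le_rfl⟩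
    ⟨le_rfl, hv⟩
  intro t ht
  exact h.ne ⟨ht.1, by linarith [ht.2, hu.2]⟩ hu (by linarith [ht.2])

theorem InjPath.right (h : InjPath γ a b) {u v : ℝ} (hu : u ∈ Icc a b) (hv : v ≤ b) (hvu : u < v) :
    γ v ∈ armTo (γ u) (γ b) := by
  refine piece_armTo h.cont (c := v) (d := b) (by linarith [hu.1]) le_rfl ?_ ⟨le_rfl, hv⟩
    ⟨hv, le_rfl⟩
  intro t ht
  exact h.ne ⟨by linarith [ht.1, hu.1], ht.2⟩ hu (by linarith [ht.1])

variable [T2Space X] [ConnectedSpace X] [CompactSpace X]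

theorem bad_finite (D : Dend X) (h : InjPath γ a b) :
    {u | u ∈ Ioo a b ∧ γ b ∈ armTo (γ u) (γ a)}.Finite := by
  have ex : ∀ u, ∃ e, u ∈ Ioo a b → e ∉ armTo (γ u) (γ a) ∧ IsEndpoint e := by
    intro u
    by_cases hu : u ∈ Ioo a b
    · obtain ⟨e, he⟩ := exists_endpoint D.fin (h.ne (Ioo_subset_Icc_self hu)
        (left_mem_Icc.2 h.lt.le) hu.1.ne')
      exact ⟨e, fun _ => he⟩
    · exact ⟨γ u, fun h => absurd h hu⟩
  choose e he using ex
  refine Set.Finite.of_injOn (f := e) (t := {x : X | IsEndpoint x}) ?_ ?_ D.en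
  · rintro u ⟨hu, -⟩
    exact (he u hu).2
  · have key : ∀ u ∈ Ioo a b, γ b ∈ armTo (γ u) (γ a) → ∀ v ∈ Ioo a b, v ≠ u →
        γ v ∈ armTo (γ u) (γ a) := by
      intro u hu hb v hv huv
      rcases lt_or_gt_of_ne huv with h1 | h1
      · exact h.left (Ioo_subset_Icc_self hu) hv.1.le h1
      · rw [armTo_eq hb]
        exact h.right (Ioo_subset_Icc_self hu) hv.2.le h1
    rintro u ⟨hu, hub⟩ v ⟨hv, hvb⟩ huv
    by_contra hne
    have h1 : (armTo (γ u) (γ a))ᶜ ⊆ armTo (γ v) (γ u) := by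
      apply subset_armTo (isPreconnected_compl_armTo D.fin _ _)
      · exact fun hh => hh (key u hu hub v hv (Ne.symm hne))
      · exact notMem_armTo
    have h2 := h1 (he u hu).1
    rw [← armTo_eq (key v hv hvb u hu hne), huv] at h2
    exact (he v hv).1 h2

theorem exists_sep (D : Dend X) {s p : X} (hsp : s ≠ p) : ∃ t, t ≠ s ∧ t ≠ p ∧ p ∉ armTo t s := by
  obtain ⟨γ, a, b, h, rfl, rfl⟩ := D.path s p hsp
  obtain ⟨u, hu, hu'⟩ := (Ioo_infinite h.lt).exists_notMem_finite (bad_finite D h)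
  have hI := Ioo_subset_Icc_self hu
  exact ⟨γ u, h.ne hI (left_mem_Icc.2 h.lt.le) hu.1.ne', h.ne hI (right_mem_Icc.2 h.lt.le) hu.2.ne,
    fun hh => hu' ⟨hu, hh⟩⟩

theorem exhaust0 (D : Dend X) (h : InjPath γ a b) {y : X} (hy : y ∈ armTo (γ b) (γ a)) :
    ∃ v ∈ Ioo a b, y ∈ armTo (γ v) (γ a) ∧ γ b ∉ armTo (γ v) (γ a) := by
  have hb := right_mem_Icc.2 h.lt.le
  have ha := left_mem_Icc.2 h.lt.le
  let A : Set X := ⋃ v ∈ {v | v ∈ Ioo a b ∧ γ b ∉ armTo (γ v) (γ a)}, armTo (γ v) (γ a)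
  have hA : ∀ x, x ∈ A ↔ ∃ v ∈ Ioo a b, x ∈ armTo (γ v) (γ a) ∧ γ b ∉ armTo (γ v) (γ a) := by
    intro x
    simp only [A, mem_iUnion, exists_prop, mem_ofPred_eq]
    constructor
    · rintro ⟨v, ⟨h1, h2⟩, h3⟩; exact ⟨v, h1, h3, h2⟩
    · rintro ⟨v, h1, h3, h2⟩; exact ⟨v, ⟨h1, h2⟩, h3⟩
  rw [← hA]
  have hγA : ∀ t, a ≤ t → t < b → γ t ∈ A := by
    intro t hat htb
    obtain ⟨u, hu, hu'⟩ := (Ioo_infinite htb).exists_notMem_finite (bad_finite D h)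
    have huI : u ∈ Ioo a b := ⟨hat.trans_lt hu.1, hu.2⟩
    exact (hA _).2 ⟨u, huI, h.left (Ioo_subset_Icc_self huI) hat hu.1, fun hh => hu' ⟨huI, hh⟩⟩
  have hAo : IsOpen A := isOpen_biUnion fun v _ => isOpen_armTo D.fin _ _
  have : armTo (γ b) (γ a) ⊆ A := by
    apply isPreconnected_armTo.subset_of_closure_inter_subset hAo
    · exact ⟨γ a, mem_armTo_self (h.ne ha hb h.lt.ne), hγA a le_rfl h.lt⟩
    · rintro s ⟨hsc, hs⟩
      by_contra hsA
      have hsb := ne_of_mem_armTo hs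
      obtain ⟨t, hts, htb, hsep⟩ := exists_sep D hsb
      have htA : t ∉ A := by
        intro htA
        obtain ⟨v, hv, htv, hbv⟩ := (hA _).1 htA
        have hsv : s ∉ armTo (γ v) (γ a) := fun hh => hsA ((hA _).2 ⟨v, hv, hh, hbv⟩)
        exact hsep (subset_armTo (isPreconnected_compl_armTo D.fin (γ v) (γ a))
          (fun hh => hh htv) hsv hbv)
      obtain ⟨r, hr, hrA⟩ := mem_closure_iff.1 hsc _ (isOpen_armTo D.fin t s)
        (mem_armTo_self hts.symm)
      obtain ⟨v, hv, hrv, hbv⟩ := (hA _).1 hrA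
      have h1 : r ∈ armTo t (γ a) := by
        refine subset_armTo isPreconnected_armTo ?_ ?_ hrv
        · exact fun hh => htA ((hA _).2 ⟨v, hv, hh, hbv⟩)
        · exact h.left (Ioo_subset_Icc_self hv) le_rfl hv.1
      have h2 : γ b ∈ armTo t (γ a) := by
        refine piece_armTo h.cont le_rfl le_rfl ?_ hb ha
        intro w hw hwt
        rcases eq_or_lt_of_le hw.2 with e | e
        · exact htb (by rw [← hwt, e])
        · exact htA (hwt ▸ hγA w hw.1 e)
      apply hsep
      rw [armTo_eq hr, ← armTo_eq h1]
      exact h2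
  exact this hy

theorem sep_path (D : Dend X) (h : InjPath γ a b) {v : ℝ} (hv : v ∈ Ioo a b) :
    γ b ∉ armTo (γ v) (γ a) := by
  intro hb
  have h' := h.sub hv.1 le_rfl hv.2.le
  obtain ⟨u, hu, h1, h2⟩ := exhaust0 D h' hb
  have huI : u ∈ Icc a b := ⟨hu.1.le, hu.2.le.trans hv.2.le⟩
  apply h2
  rw [armTo_eq h1]
  exact h.right huI hv.2.le hu.2

theorem exhaust (D : Dend X) (h : InjPath γ a b) {y : X} (hy : y ∈ armTo (γ b) (γ a)) :
    ∃ v ∈ Ioo a b, y ∈ armTo (γ v) (γ a) := by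
  obtain ⟨v, hv, h1, -⟩ := exhaust0 D h hy
  exact ⟨v, hv, h1⟩

theorem exhaust' (D : Dend X) (h : InjPath γ a b) {y : X} (hy : y ∈ armTo (γ a) (γ b)) :
    ∃ v ∈ Ioo a b, y ∈ armTo (γ v) (γ b) := by
  obtain ⟨v, hv, h1⟩ := exhaust D h.rev (y := y) (by simpa using hy)
  exact ⟨-v, ⟨by linarith [hv.2], by linarith [hv.1]⟩, by simpa using h1⟩

theorem path_subset (D : Dend X) (h : InjPath γ a b) {S : Set X} (hS : IsPreconnected S)
    (ha : γ a ∈ S) (hb : γ b ∈ S) {v : ℝ} (hv : v ∈ Icc a b) : γ v ∈ S := by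
  rcases eq_or_lt_of_le hv.1 with e | e1
  · exact e ▸ ha
  rcases eq_or_lt_of_le hv.2 with e | e2
  · exact e ▸ hb
  by_contra hcon
  exact sep_path D h ⟨e1, e2⟩ (subset_armTo hS hcon ha hb)

theorem two_arms (D : Dend X) (h : InjPath γ a b) {v : ℝ} (hv : v ∈ Ioo a b)
    (hnb : ¬ IsBranchPt (γ v)) {y : X} (hy : y ≠ γ v) :
    y ∈ armTo (γ v) (γ a) ∨ y ∈ armTo (γ v) (γ b) := by
  by_contra! hcon
  apply hnb
  have hI := Ioo_subset_Icc_self hv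
  have ha := h.ne (left_mem_Icc.2 h.lt.le) hI hv.1.ne
  have hb := h.ne (right_mem_Icc.2 h.lt.le) hI hv.2.ne'
  have e1 : armTo (γ v) (γ a) ≠ armTo (γ v) (γ b) := fun e =>
    sep_path D h hv (e ▸ mem_armTo_self hb)
  have e2 : armTo (γ v) (γ a) ≠ armTo (γ v) y := fun e =>
    hcon.1 (e ▸ mem_armTo_self hy)
  have e3 : armTo (γ v) (γ b) ≠ armTo (γ v) y := fun e =>
    hcon.2 (e ▸ mem_armTo_self hy)
  have hc : ({armTo (γ v) (γ a), armTo (γ v) (γ b), armTo (γ v) y} : Set (Set X)).ncard = 3 :=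
    ncard_eq_three.2 ⟨_, _, _, e1, e2, e3, rfl⟩
  rw [IsBranchPt, ← hc]
  apply ncard_le_ncard _ (D.fin _)
  rintro C (rfl | rfl | rfl)
  exacts [armTo_mem_arms ha, armTo_mem_arms hb, armTo_mem_arms hy]

theorem local_arm (D : Dend X) (h : InjPath γ a b) :
    ∃ U ∈ 𝓝 (γ a), ∀ y ∈ armTo (γ a) (γ b) ∩ U, y ∈ γ '' Ioo a b := by
  obtain ⟨u0, hu0, hnb⟩ : ∃ u0 ∈ Ioo a b, ∀ v ∈ Ioc a u0, ¬ IsBranchPt (γ v) := by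
    have hB : {v | v ∈ Ioo a b ∧ IsBranchPt (γ v)}.Finite :=
      Set.Finite.of_injOn (f := γ) (t := {x : X | IsBranchPt x}) (fun v hv => hv.2)
        (h.inj.mono fun v hv => Ioo_subset_Icc_self hv.1) D.br
    have hmem : {v | v ∈ Ioo a b ∧ IsBranchPt (γ v)}ᶜ ∈ 𝓝 a :=
      hB.isClosed.isOpen_compl.mem_nhds (fun hh => lt_irrefl _ hh.1.1)
    obtain ⟨ε, hε, hball⟩ := Metric.mem_nhds_iff.1 hmem
    refine ⟨a + min (ε / 2) ((b - a) / 2), ?_, ?_⟩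
    · have := h.lt
      constructor
      · have : 0 < min (ε / 2) ((b - a) / 2) := lt_min (by linarith) (by linarith)
        linarith
      · have := min_le_right (ε / 2) ((b - a) / 2)
        linarith
    · intro v hv hbr
      have h1 := min_le_right (ε / 2) ((b - a) / 2)
      have h2 := min_le_left (ε / 2) ((b - a) / 2)
      have hl := h.lt
      refine hball (a := v) ?_ ⟨⟨hv.1, by linarith [hv.2]⟩, hbr⟩
      rw [Metric.mem_ball, Real.dist_eq, abs_of_pos (by linarith [hv.1])]
      linarith [hv.2]
  have hu0I := Ioo_subset_Icc_self hu0
  refine ⟨armTo (γ u0) (γ a), (isOpen_armTo D.fin _ _).mem_nhds (mem_armTo_self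
    (h.ne (left_mem_Icc.2 h.lt.le) hu0I hu0.1.ne)), ?_⟩
  rintro y ⟨hyC, hyU⟩
  by_contra hyγ
  have dis : ∀ v ∈ Ioo a b, y ∈ armTo (γ v) (γ a) → y ∈ armTo (γ v) (γ b) → False := by
    intro v hv h1 h2
    apply sep_path D h hv
    rw [armTo_eq h1, ← armTo_eq h2]
    exact mem_armTo_self (h.ne (right_mem_Icc.2 h.lt.le) (Ioo_subset_Icc_self hv) hv.2.ne')
  have mono1 : ∀ v ∈ Ioo a b, ∀ v' ∈ Ioo a b, v ≤ v' → y ∈ armTo (γ v) (γ a) →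
      y ∈ armTo (γ v') (γ a) := by
    intro v hv v' hv' hle hy
    rcases eq_or_lt_of_le hle with rfl | hlt
    · exact hy
    refine subset_armTo isPreconnected_armTo ?_ ?_ hy
    · intro hh
      apply sep_path D h hv
      rw [armTo_eq hh]
      exact armTo_comm (h.right (Ioo_subset_Icc_self hv) hv'.2.le hlt)
    · exact mem_armTo_self (h.ne (left_mem_Icc.2 h.lt.le) (Ioo_subset_Icc_self hv) hv.1.ne)
  have mono2 : ∀ v ∈ Ioo a b, ∀ v' ∈ Ioo a b, v ≤ v' → y ∈ armTo (γ v') (γ b) →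
      y ∈ armTo (γ v) (γ b) := by
    intro v hv v' hv' hle hy
    rcases eq_or_lt_of_le hle with rfl | hlt
    · exact hy
    refine subset_armTo isPreconnected_armTo ?_ ?_ hy
    · intro hh
      apply sep_path D h hv'
      have := h.left (Ioo_subset_Icc_self hv') hv.1.le hlt
      rw [armTo_eq this, ← armTo_eq hh]
      exact mem_armTo_self (h.ne (right_mem_Icc.2 h.lt.le) (Ioo_subset_Icc_self hv') hv'.2.ne')
    · exact mem_armTo_self (h.ne (right_mem_Icc.2 h.lt.le) (Ioo_subset_Icc_self hv') hv'.2.ne')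
  obtain ⟨v, hv, hyv⟩ := exhaust' D h hyC
  obtain ⟨v', hv', hyv'⟩ := exhaust D (h.sub hu0.1 le_rfl hu0.2.le) hyU
  have hv'I : v' ∈ Ioo a b := ⟨hv'.1, hv'.2.trans hu0.2⟩
  have hvv' : v < v' := by
    by_contra! hle
    exact dis v hv (mono1 v' hv'I v hv hle hyv') hyv
  let P : Set ℝ := {w | w ∈ Ioo a u0 ∧ y ∈ armTo (γ w) (γ b)}
  have hvP : v ∈ P := ⟨⟨hv.1, hvv'.trans hv'.2⟩, hyv⟩
  have hub : ∀ w ∈ P, w ≤ v' := by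
    intro w hw
    by_contra! hlt
    exact dis v' hv'I hyv' (mono2 v' hv'I w ⟨hw.1.1, hw.1.2.trans hu0.2⟩ hlt.le hw.2)
  have hbdd : BddAbove P := ⟨v', hub⟩
  have hs1 : v ≤ sSup P := le_csSup hbdd hvP
  have hs2 : sSup P ≤ v' := csSup_le ⟨v, hvP⟩ hub
  have hsI : sSup P ∈ Ioo a b := ⟨hv.1.trans_le hs1, hs2.trans_lt hv'I.2⟩
  have hy' : y ≠ γ (sSup P) := fun e => hyγ ⟨_, hsI, e.symm⟩
  rcases two_arms D h hsI (hnb _ ⟨hsI.1, hs2.trans hv'.2.le⟩) hy' with h1 | h1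
  · obtain ⟨v1, hv1, hy1⟩ := exhaust D (h.sub hsI.1 le_rfl hsI.2.le) h1
    obtain ⟨v2, hv2, hlt⟩ := exists_lt_of_lt_csSup ⟨v, hvP⟩ hv1.2
    have hv1I : v1 ∈ Ioo a b := ⟨hv1.1, hv1.2.trans hsI.2⟩
    exact dis v1 hv1I hy1 (mono2 v1 hv1I v2 ⟨hv2.1.1, hv2.1.2.trans hu0.2⟩ hlt.le hv2.2)
  · obtain ⟨v3, hv3, hy3⟩ := exhaust' D (h.sub hsI.2 hsI.1.le le_rfl) h1
    have hv3I : v3 ∈ Ioo a b := ⟨hsI.1.trans hv3.1, hv3.2⟩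
    rcases lt_or_ge v3 u0 with hlt | hge
    · exact absurd (le_csSup hbdd (show v3 ∈ P from ⟨⟨hv3I.1, hlt⟩, hy3⟩)) (not_le.2 hv3.1)
    · exact dis v' hv'I hyv' (mono2 v' hv'I v3 hv3I (hv'.2.le.trans hge) hy3)

theorem injOn_of_local (D : Dend X) {β : ℝ → X} (hc : ContinuousOn β (Icc a b))
    (hl : ∀ s ∈ Icc a b, ∃ V : Set ℝ, IsOpen V ∧ s ∈ V ∧ InjOn β (V ∩ Icc a b)) :
    InjOn β (Icc a b) := by
  choose! V hVo hVs hVi using hl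
  let O : Set (ℝ × ℝ) := ⋃ s ∈ Icc a b, V s ×ˢ V s
  have hO : IsOpen O := isOpen_biUnion fun s hs => (hVo s hs).prod (hVo s hs)
  let Q : Set (ℝ × ℝ) := (Icc a b ×ˢ Icc a b) ∩ (fun p => (β p.1, β p.2)) ⁻¹' (diagonal X)
  have hQ : IsClosed Q := by
    apply ContinuousOn.preimage_isClosed_of_isClosed _ (isClosed_Icc.prod isClosed_Icc)
      isClosed_diagonal
    apply ContinuousOn.prodMk
    · exact hc.comp continuous_fst.continuousOn fun p hp => hp.1
    · exact hc.comp continuous_snd.continuousOn fun p hp => hp.2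
  let K : Set (ℝ × ℝ) := (Q ∩ {p | p.1 ≤ p.2}) ∩ Oᶜ
  have hK : IsCompact K := by
    apply (isCompact_Icc.prod isCompact_Icc).of_isClosed_subset
      ((hQ.inter (isClosed_le continuous_fst continuous_snd)).inter hO.isClosed_compl)
    exact fun p hp => hp.1.1.1
  have hmem : ∀ s ∈ Icc a b, ∀ t ∈ Icc a b, s < t → β s = β t → (s, t) ∈ K := by
    intro s hs t ht hst e
    refine ⟨⟨⟨⟨hs, ht⟩, e⟩, hst.le⟩, ?_⟩
    intro hO
    simp only [O, mem_iUnion] at hO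
    obtain ⟨r, hr, h1, h2⟩ := hO
    exact hst.ne (hVi r hr ⟨h1, hs⟩ ⟨h2, ht⟩ e)
  suffices hKe : ¬ K.Nonempty by
    intro s hs t ht e
    by_contra hne
    rcases lt_or_gt_of_ne hne with hlt | hlt
    · exact hKe ⟨_, hmem s hs t ht hlt e⟩
    · exact hKe ⟨_, hmem t ht s hs hlt e.symm⟩
  intro hne
  obtain ⟨⟨s, t⟩, hst, hmin⟩ := hK.exists_isMinOn hne
    (f := fun p : ℝ × ℝ => p.2 - p.1) (by fun_prop)
  have hsI : s ∈ Icc a b := hst.1.1.1.1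
  have htI : t ∈ Icc a b := hst.1.1.1.2
  have heq : β s = β t := hst.1.1.2
  have hle : s ≤ t := hst.1.2
  have hlt : s < t := by
    refine lt_of_le_of_ne hle ?_
    rintro rfl
    exact hst.2 (mem_biUnion hsI ⟨hVs s hsI, hVs s hsI⟩)
  have hinj : ∀ s' t', s ≤ s' → s' < t' → t' ≤ t → β s' = β t' → s' = s ∧ t' = t := by
    intro s' t' h1 h2 h3 e
    have := hmin (hmem s' ⟨hsI.1.trans h1, by linarith [htI.2]⟩ t' ⟨by linarith [hsI.1], by linarith [htI.2]⟩ h2 e)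
    simp only [mem_ofPred_eq] at this
    constructor <;> linarith
  obtain ⟨r, hr1, hr2⟩ := exists_between hlt
  obtain ⟨u, hu1, hu2⟩ := exists_between hr1
  have hp : InjPath β s r := by
    refine ⟨hr1, hc.mono (Icc_subset_Icc hsI.1 (by linarith [htI.2])), ?_⟩
    intro x hx y hy e
    by_contra hne
    rcases lt_or_gt_of_ne hne with hlt | hlt
    · linarith [(hinj x y hx.1 hlt (by linarith [hy.2]) e).2, hy.2]
    · linarith [(hinj y x hy.1 hlt (by linarith [hx.2]) e.symm).2, hx.2]
  apply sep_path D hp ⟨hu1, hu2⟩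
  rw [heq]
  refine piece_armTo hc (c := r) (d := t) (by linarith [hsI.1]) htI.2 ?_ ⟨le_rfl, hr2.le⟩
    ⟨hr2.le, le_rfl⟩
  intro w hw e
  linarith [(hinj u w hu1.le (by linarith [hw.1]) hw.2 e.symm).1]

end Paths

section Dyn

variable {X : Type*} [TopologicalSpace X]

theorem HubbardTree.dend (H : HubbardTree X) : Dend X := by
  refine ⟨H.arms_finite, H.branch_finite, H.endpoint_finite, ?_⟩
  intro x y hxy
  rcases H.arc_isArc x y with ⟨h, -⟩ | ⟨-, γ, hγ, -⟩
  · exact absurd h hxy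
  · refine ⟨γ.extend, 0, 1, ⟨zero_lt_one, γ.continuous_extend.continuousOn, ?_⟩, by simp, by simp⟩
    intro s hs t ht e
    rw [Path.extend_apply γ hs, Path.extend_apply γ ht] at e
    exact congrArg Subtype.val (hγ.injective e)

variable [T2Space X] [ConnectedSpace X] [CompactSpace X] {γ : ℝ → X} {a b : ℝ}

theorem f_inj_path (H : HubbardTree X) (h : InjPath γ a b) (hc : ∀ t ∈ Icc a b, γ t ≠ H.c0) :
    InjOn (fun t => H.f (γ t)) (Icc a b) := by
  apply injOn_of_local H.dend (H.cont.comp_continuousOn h.cont)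
  intro s hs
  obtain ⟨U, hU, hsU, hemb⟩ := H.local_homeo _ (hc s hs)
  have hinj : InjOn H.f U := injOn_iff_injective.2 hemb.injective
  obtain ⟨V, hVo, hV⟩ := (continuousOn_iff'.1 h.cont) U hU
  refine ⟨V, hVo, ?_, ?_⟩
  · have : s ∈ γ ⁻¹' U ∩ Icc a b := ⟨hsU, hs⟩
    rw [hV] at this
    exact this.1
  · rw [← hV]
    intro s hs t ht e
    exact h.inj hs.2 ht.2 (hinj hs.1 ht.1 e)

theorem step_germ (H : HubbardTree X) {g : X → X} (hg : Continuous g) {z w : X} {G : Set X}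
    (hM : MapsLocalArm g z G (armTo (g z) w)) (h : InjPath γ a b) (ha : γ a = g z) (hb : γ b = w)
    (hc : ∀ t ∈ Ico a b, γ t ≠ H.c0) (hne : H.f w ≠ H.f (g z)) :
    MapsLocalArm (H.f ∘ g) z G (armTo (H.f (g z)) (H.f w)) := by
  obtain ⟨hG, -, V, hV, hVs⟩ := hM
  subst hb
  obtain ⟨U, hU, hUs⟩ := local_arm H.dend h
  rw [ha] at hU hUs
  refine ⟨hG, armTo_mem_arms hne, V ∩ g ⁻¹' U, Filter.inter_mem hV (hg.continuousAt hU), ?_⟩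
  rintro _ ⟨y, ⟨hyG, hyV, hyU⟩, rfl⟩
  obtain ⟨t, ht, hty⟩ := hUs (g y) ⟨hVs ⟨y, ⟨hyG, hyV⟩, rfl⟩, hyU⟩
  have hav : ∀ s ∈ Icc t b, H.f (γ s) ≠ H.f (g z) := by
    intro s hs e
    rcases eq_or_lt_of_le hs.2 with e' | hlt
    · exact hne (e' ▸ e)
    · have has : a < s := ht.1.trans_le hs.1
      have := f_inj_path H (h.sub has le_rfl hs.2) (fun r hr => hc r ⟨hr.1, hr.2.trans_lt hlt⟩)
        (right_mem_Icc.2 has.le) (left_mem_Icc.2 has.le) (by simpa [ha] using e)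
      linarith
  have := piece_armTo (γ := fun s => H.f (γ s)) (H.cont.comp_continuousOn h.cont) ht.1.le le_rfl
    hav (left_mem_Icc.2 ht.2.le) (right_mem_Icc.2 ht.2.le)
  simpa [hty] using this

theorem f_inj_conn (H : HubbardTree X) {S : Set X} (hS : IsPreconnected S) (hc : H.c0 ∉ S) :
    InjOn H.f S := by
  intro x hx y hy e
  by_contra hne
  obtain ⟨γ, a, b, h, rfl, rfl⟩ := H.dend.path x y hne
  have := f_inj_path H h (fun t ht e => hc (e ▸ path_subset H.dend h hS hx hy ht))
    (left_mem_Icc.2 h.lt.le) (right_mem_Icc.2 h.lt.le) e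
  exact h.lt.ne this

theorem step_germ' (H : HubbardTree X) {g : X → X} (hg : Continuous g) {z w : X} {G : Set X}
    (hM : MapsLocalArm g z G (armTo (g z) w)) {S : Set X} (hS : IsPreconnected S)
    (hzS : g z ∈ S) (hwS : w ∈ S) (hw : w ≠ g z) (hc : H.c0 ∉ S) :
    H.f w ≠ H.f (g z) ∧ MapsLocalArm (H.f ∘ g) z G (armTo (H.f (g z)) (H.f w)) := by
  have hne : H.f w ≠ H.f (g z) := fun e => hw (f_inj_conn H hS hc hwS hzS e)
  refine ⟨hne, ?_⟩
  obtain ⟨γ, a, b, h, ha, hb⟩ := H.dend.path _ _ hw.symm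
  refine step_germ H hg hM h ha hb ?_ hne
  intro t ht e
  exact hc (e ▸ path_subset H.dend h hS (ha ▸ hzS) (hb ▸ hwS) (Ico_subset_Icc_self ht))

theorem step_c0 (H : HubbardTree X) {g : X → X} (hg : Continuous g) {z : X} {G : Set X}
    (hM : MapsLocalArm g z G (armTo (g z) H.c0)) (hz : g z ≠ H.c0) (hne : H.c1 ≠ H.f (g z)) :
    MapsLocalArm (H.f ∘ g) z G (armTo (H.f (g z)) H.c1) := by
  obtain ⟨γ, a, b, h, ha, hb⟩ := H.dend.path _ _ hz
  refine step_germ H hg hM h ha hb ?_ hne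
  intro t ht e
  rw [← hb] at e
  exact ht.2.ne (h.inj (Ico_subset_Icc_self ht) (right_mem_Icc.2 h.lt.le) e)

end Dyn

theorem main_aux {X : Type*} [TopologicalSpace X] (H : HubbardTree X) (z : X) (m : ℕ)
    (hchar : H.IsCharacteristic z) (hper : ExactPeriod H.f z m)
    (G : Set X) (hG : G ∈ arms z) :
    ((∀ k : ℕ, k < m → H.c0 ∉ H.f^[k] '' G) ∧ MapsHomeoOn (H.f^[m]) G) ∨
    MapsLocalArm (H.f^[m]) z G (armTo z H.c0) ∨
    MapsLocalArm (H.f^[m]) z G (armTo z H.c1) := by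
  have := H.t2
  have := H.compact
  have := H.conn
  have D := H.dend
  obtain ⟨hm1, hmz, hex⟩ := hper
  obtain ⟨Cv, Cz, ⟨yv, hyv, hCv⟩, ⟨yz, hyz, hCz⟩, hne, hv, h0, horb⟩ := hchar
  change Cv = armTo z yv at hCv
  change Cz = armTo z yz at hCz
  subst hCv hCz
  have hdisj : ∀ x, x ∈ armTo z yv → x ∈ armTo z yz → False := fun x h1 h2 =>
    hne ((armTo_eq h1).trans (armTo_eq h2).symm)
  -- critical value not on the orbit
  have hc1 : ∀ k, H.f^[k] z ≠ H.c1 := by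
    intro k e
    by_cases h : H.f^[k] z = z
    · rw [h] at e
      exact ne_of_mem_armTo hv e.symm
    · exact hdisj _ hv (e ▸ horb k h)
  have hc0 : ∀ k, H.f^[k] z ≠ H.c0 := by
    intro k e
    apply hc1 (k + 1)
    rw [Function.iterate_succ_apply', e]
    rfl
  have hcont : ∀ k, Continuous (H.f^[k]) := fun k => H.cont.iterate k
  obtain ⟨yG, hyG, hGe⟩ := hG
  change G = armTo z yG at hGe
  have hGpre : IsPreconnected (insert z G) := hGe ▸ isPreconnected_insert_armTo D.fin z yG
  have hGarms : G ∈ arms z := ⟨yG, hyG, hGe⟩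
  have himg : ∀ k, IsPreconnected (H.f^[k] '' insert z G) := fun k =>
    hGpre.image _ (hcont k).continuousOn
  have hins : ∀ k, H.c0 ∉ H.f^[k] '' G → H.c0 ∉ H.f^[k] '' insert z G := by
    rintro k h ⟨x, rfl | hx, e⟩
    · exact hc0 k e
    · exact h ⟨x, hx, e⟩
  by_cases hall : ∀ k : ℕ, k < m → H.c0 ∉ H.f^[k] '' G
  · left
    refine ⟨hall, ?_⟩
    have hinj : ∀ k, k ≤ m → InjOn (H.f^[k]) (insert z G) := by
      intro k
      induction k with
      | zero => intro _; simp
      | succ k ih =>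
        intro hk
        rw [Function.iterate_succ']
        exact (f_inj_conn H (himg k) (hins k (hall k hk))).comp (ih (by omega))
          (mapsTo_image _ _)
    have hcl : IsClosed (insert z G) := by
      apply isClosed_of_closure_subset
      rw [insert_eq, closure_union, closure_singleton, ← insert_eq, hGe]
      exact insert_subset (mem_insert _ _) closure_armTo
    have hcomp : CompactSpace (insert z G : Set X) := isCompact_iff_compactSpace.1 hcl.isCompact
    have hemb : IsEmbedding ((insert z G).restrict (H.f^[m])) := by
      apply IsClosedEmbedding.isEmbedding
      apply Continuous.isClosedEmbedding
      · exact (hcont m).comp continuous_subtype_val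
      · exact injOn_iff_injective.1 (hinj m le_rfl)
    exact hemb.comp (IsEmbedding.inclusion (subset_insert z G))
  right
  push Not at hall
  have hP : ∃ k, k < m ∧ H.c0 ∈ H.f^[k] '' G := hall
  classical
  obtain ⟨hkm, g, hgG, hgk⟩ := Nat.find_spec hP
  have hmin : ∀ j, j < Nat.find hP → H.c0 ∉ H.f^[j] '' G := by
    intro j hj h
    exact Nat.find_min hP hj ⟨hj.trans hkm, h⟩
  generalize Nat.find hP = k at hkm hgk hmin
  have hgz : g ≠ z := by
    rw [hGe] at hgG
    exact ne_of_mem_armTo hgG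
  -- first phase
  have phase1 : ∀ j, j ≤ k → H.f^[j] g ≠ H.f^[j] z ∧
      MapsLocalArm (H.f^[j]) z G (armTo (H.f^[j] z) (H.f^[j] g)) := by
    intro j
    induction j with
    | zero =>
      intro _
      refine ⟨hgz, hGarms, armTo_mem_arms hgz, univ, Filter.univ_mem, ?_⟩
      have : G = armTo z g := by
        rw [hGe] at hgG ⊢
        exact armTo_eq hgG
      simp [← this]
    | succ j ih =>
      intro hj
      obtain ⟨h1, h2⟩ := ih (by omega)
      rw [Function.iterate_succ', Function.comp_apply, Function.comp_apply]
      exact step_germ' H (hcont j) h2 (himg j) (mem_image_of_mem _ (mem_insert _ _))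
        (mem_image_of_mem _ (mem_insert_of_mem _ hgG)) h1 (hins j (hmin j hj))
  -- second phase
  have phase2 : ∀ j, k + 1 ≤ j → j ≤ m → ∃ w, ((∃ i, H.f^[i] z = w) ∨ w = H.c1) ∧
      w ≠ H.f^[j] z ∧ MapsLocalArm (H.f^[j]) z G (armTo (H.f^[j] z) w) := by
    intro j hj
    have toC1 : ∀ j, MapsLocalArm (H.f^[j]) z G (armTo (H.f^[j] z) H.c0) →
        ∃ w, ((∃ i, H.f^[i] z = w) ∨ w = H.c1) ∧
        w ≠ H.f^[j+1] z ∧ MapsLocalArm (H.f^[j+1]) z G (armTo (H.f^[j+1] z) w) := by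
      intro j hM
      have hn := (hc1 (j+1)).symm
      refine ⟨H.c1, Or.inr rfl, hn, ?_⟩
      rw [Function.iterate_succ', Function.comp_apply] at hn ⊢
      exact step_c0 H (hcont j) hM (hc0 j) hn
    induction j, hj using Nat.le_induction with
    | base =>
      intro _
      apply toC1
      have := (phase1 k le_rfl).2
      rwa [hgk] at this
    | succ j hj ih =>
      intro hjm
      obtain ⟨w, hw, hwne, hM⟩ := ih (by omega)
      have hred : ∃ w, (∃ i, H.f^[i] z = w) ∧ w ≠ H.f^[j] z ∧
          MapsLocalArm (H.f^[j]) z G (armTo (H.f^[j] z) w) := by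
        rcases hw with hw | rfl
        · exact ⟨w, hw, hwne, hM⟩
        · have hjz : H.f^[j] z ≠ z := hex j (by omega) (by omega)
          refine ⟨z, ⟨0, rfl⟩, hjz.symm, ?_⟩
          have : z ∈ armTo (H.f^[j] z) H.c1 := by
            refine subset_armTo (isPreconnected_insert_armTo D.fin z yv) ?_ (Or.inr hv)
              (mem_insert _ _)
            rintro (h | h)
            · exact hjz h
            · exact hdisj _ h (horb j hjz)
          rwa [← armTo_eq this]
      clear hM hwne hw w
      obtain ⟨w, ⟨i, hi⟩, hwne, hM⟩ := hred
      obtain ⟨γ, a, b, h, ha, hb⟩ := D.path _ _ hwne.symm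
      by_cases hcγ : ∃ t ∈ Icc a b, γ t = H.c0
      · obtain ⟨t, ht, hct⟩ := hcγ
        apply toC1
        have hat : a < t := by
          refine lt_of_le_of_ne ht.1 ?_
          rintro rfl
          exact hc0 j (ha ▸ hct)
        have : H.c0 ∈ armTo (H.f^[j] z) w := by
          rw [← ha, ← hb, ← hct]
          exact h.right (left_mem_Icc.2 h.lt.le) ht.2 hat
        rwa [armTo_eq this] at hM
      · push Not at hcγ
        obtain ⟨h1, h2⟩ := step_germ' H (hcont j) hM (S := γ '' Icc a b)
          (isPreconnected_Icc.image _ h.cont) (ha ▸ mem_image_of_mem _ (left_mem_Icc.2 h.lt.le))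
          (hb ▸ mem_image_of_mem _ (right_mem_Icc.2 h.lt.le)) hwne
          (by rintro ⟨t, ht, e⟩; exact hcγ t ht e)
        refine ⟨H.f w, Or.inl ⟨i + 1, ?_⟩, ?_⟩
        · rw [Function.iterate_succ_apply', hi]
        · rw [Function.iterate_succ', Function.comp_apply]
          exact ⟨h1, h2⟩
  obtain ⟨w, hw, hwne, hM⟩ := phase2 m hkm le_rfl
  rw [hmz] at hwne hM
  rcases hw with ⟨i, hi⟩ | rfl
  · left
    have h1 : w ∈ armTo z yz := hi ▸ horb i (hi ▸ hwne)
    rwa [← armTo_eq h0, armTo_eq h1]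
  · right
    exact hM

end Helpers

/-- Proposition 3.3, "Images of Global Arms".
Let `z` be a characteristic periodic point of exact period `m` and `G` a global arm
at `z`. Then either no image `f^[k] G` for `0 ≤ k < m` contains the critical point
(and in particular the first return map maps `G` homeomorphically onto its image),
or the first return map sends the local arm in `G` to the local arm at `z` pointing
to the critical point or to the local arm at `z` pointing to the critical value. -/
theorem images_of_global_arms
    {X : Type*} [TopologicalSpace X] (H : HubbardTree X) (z : X) (m : ℕ)
    (hchar : H.IsCharacteristic z) (hper : ExactPeriod H.f z m)
    (G : Set X) (hG : G ∈ arms z) :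
    ((∀ k : ℕ, k < m → H.c0 ∉ H.f^[k] '' G) ∧ MapsHomeoOn (H.f^[m]) G) ∨
    MapsLocalArm (H.f^[m]) z G (armTo z H.c0) ∨
    MapsLocalArm (H.f^[m]) z G (armTo z H.c1) := by
  exact main_aux H z m hchar hper G hG

end HubbardTrees
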